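/- arXiv:2109.13214 — 7 statements merged into one kernel-verified Lean document; each statement's English description precedes it below -/
import Mathlib

section
/- Let μ, v ∈ ℝ^m, ρ > 0, ω > 0, τ ≥ 0, and set μ′ = (1/(1+τ))(τμ − ω^{−1}ρ v). Then (⟨μ, v⟩ + (ω/(2ρ))‖μ‖²) − (⟨μ′, v⟩ + (ω/(2ρ))‖μ′‖²) ≥ (τ + 1/2)(ω/ρ)‖μ′ − μ‖². -/
open scoped RealInnerProductSpace

/-- descent inequality of the scaled dual descent (SDD) update. -/
theorem sdd_dual_descent_inequality
    {m : ℕ} (μ v : EuclideanSpace ℝ (Fin m)) (ρ ω τ : ℝ)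
    (hρ : 0 < ρ) (hω : 0 < ω) (hτ : 0 ≤ τ)
    (μ' : EuclideanSpace ℝ (Fin m))
    (hμ' : μ' = (1 / (1 + τ)) • (τ • μ - ω⁻¹ • ρ • v)) :
    (⟪μ, v⟫ + ω / (2 * ρ) * ‖μ‖ ^ 2) - (⟪μ', v⟫ + ω / (2 * ρ) * ‖μ'‖ ^ 2)
      ≥ (τ + 1 / 2) * (ω / ρ) * ‖μ' - μ‖ ^ 2 := by
  have hτ1 : 1 + τ ≠ 0 := by positivity
  -- The update rule solved for `v`: the first-order optimality condition of `μ'`.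
  have hv : v = (ω / ρ) • (τ • μ - (1 + τ) • μ') := by
    rw [hμ', smul_smul, mul_one_div_cancel hτ1, one_smul, sub_sub_cancel, smul_smul, smul_smul]
    have h1 : ω / ρ * ω⁻¹ * ρ = 1 := by field_simp
    rw [h1, one_smul]
  -- Eliminating `v` leaves an identity in `‖μ‖²`, `‖μ'‖²` and `⟪μ, μ'⟫`, so equality holds.
  clear hμ'
  subst hv
  apply ge_of_eq
  rw [norm_sub_sq_real]
  simp only [inner_smul_right, inner_sub_right, real_inner_self_eq_norm_sq]
  rw [real_inner_comm μ μ']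
  field_simp
  ring
end

section
/- (Dual boundedness under uniformly bounded shifted multipliers, key step of Theorem 3.6.) Let ρ > 0, ω ≥ 4, τ ≥ 0, Λ > 0. Let {μ^k}_{k∈ℕ} ⊆ ℝ^m and {v^{k+1}}_{k∈ℕ} ⊆ ℝ^m satisfy μ^0 = 0 and μ^{k+1} = (1/(1+τ))(τμ^k − ω^{−1}ρ v^{k+1}) for all k. If ‖μ^k + ρ v^{k+1}‖ ≤ Λ for all k ∈ ℕ, then ‖μ^k‖ ≤ Λ/(ω−1) for all k ∈ ℕ, and consequently ‖v^{k+1}‖ ≤ (Λ/ρ)(1/(ω−1) + 1) ≤ 2Λ/ρ for all k ∈ ℕ. -/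
/-!
Writing `s = μ k + ρ • v (k + 1)` for the shifted multiplier, the dual update reads
`(1 + τ) • μ (k + 1) = (τ + ω⁻¹) • μ k - ω⁻¹ • s`, which is a contraction in `μ k` with bounded
forcing. The number `B = Λ / (ω - 1)` is the fixed point of the resulting scalar inequality,
`(τ + ω⁻¹) * B + ω⁻¹ * Λ = (1 + τ) * B`, so the ball of radius `B` is invariant, and it contains
`μ 0 = 0`. The bounds on `v` follow from `ρ • v (k + 1) = s - μ k` and `B ≤ Λ`.
-/

/-- dual boundedness under uniformly bounded shifted multipliers
(key step of Theorem 3.6). -/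
theorem sdd_dual_boundedness
    {m : ℕ} (ρ ω τ Λ : ℝ)
    (hρ : 0 < ρ) (hω : 4 ≤ ω) (hτ : 0 ≤ τ) (hΛ : 0 < Λ)
    (μ v : ℕ → EuclideanSpace ℝ (Fin m))
    (hμ0 : μ 0 = 0)
    (hupd : ∀ k, μ (k + 1) = (1 / (1 + τ)) • (τ • μ k - (ω⁻¹ * ρ) • v (k + 1)))
    (hbound : ∀ k, ‖μ k + ρ • v (k + 1)‖ ≤ Λ) :
    (∀ k, ‖μ k‖ ≤ Λ / (ω - 1))
      ∧ (∀ k, ‖v (k + 1)‖ ≤ Λ / ρ * (1 / (ω - 1) + 1))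
      ∧ (∀ k, ‖v (k + 1)‖ ≤ 2 * Λ / ρ) := by
  have hω0 : 0 < ω := by linarith
  have hω1 : 0 < ω - 1 := by linarith
  have hτ1 : 0 < 1 + τ := by linarith
  have hμ : ∀ k, ‖μ k‖ ≤ Λ / (ω - 1) := by
    intro k
    induction k with
    | zero => rw [hμ0, norm_zero]; positivity
    | succ k ih =>
      have hrec : μ (k + 1)
          = (1 / (1 + τ)) • ((τ + ω⁻¹) • μ k - ω⁻¹ • (μ k + ρ • v (k + 1))) := by
        rw [hupd k]
        congr 1
        module
      have hfix : (1 / (1 + τ)) * ((τ + ω⁻¹) * (Λ / (ω - 1)) + ω⁻¹ * Λ) = Λ / (ω - 1) := by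
        field_simp
        ring
      calc ‖μ (k + 1)‖
          = (1 / (1 + τ)) * ‖(τ + ω⁻¹) • μ k - ω⁻¹ • (μ k + ρ • v (k + 1))‖ := by
            rw [hrec, norm_smul, Real.norm_of_nonneg (by positivity)]
        _ ≤ (1 / (1 + τ)) * (‖(τ + ω⁻¹) • μ k‖ + ‖ω⁻¹ • (μ k + ρ • v (k + 1))‖) := by
            gcongr
            exact norm_sub_le _ _
        _ = (1 / (1 + τ)) * ((τ + ω⁻¹) * ‖μ k‖ + ω⁻¹ * ‖μ k + ρ • v (k + 1)‖) := by
            rw [norm_smul, norm_smul, Real.norm_of_nonneg (by positivity : 0 ≤ τ + ω⁻¹),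
              Real.norm_of_nonneg (by positivity : 0 ≤ ω⁻¹)]
        _ ≤ (1 / (1 + τ)) * ((τ + ω⁻¹) * (Λ / (ω - 1)) + ω⁻¹ * Λ) := by
            gcongr
            exact hbound k
        _ = Λ / (ω - 1) := hfix
  have hv : ∀ k, ‖v (k + 1)‖ ≤ Λ / ρ * (1 / (ω - 1) + 1) := by
    intro k
    have h : ρ * ‖v (k + 1)‖ ≤ Λ + Λ / (ω - 1) := by
      calc ρ * ‖v (k + 1)‖ = ‖(μ k + ρ • v (k + 1)) - μ k‖ := by
            rw [add_sub_cancel_left, norm_smul, Real.norm_of_nonneg hρ.le]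
        _ ≤ ‖μ k + ρ • v (k + 1)‖ + ‖μ k‖ := norm_sub_le _ _
        _ ≤ Λ + Λ / (ω - 1) := add_le_add (hbound k) (hμ k)
    have heq : Λ / ρ * (1 / (ω - 1) + 1) = (Λ + Λ / (ω - 1)) / ρ := by ring
    rw [heq, le_div_iff₀ hρ]
    linarith
  refine ⟨hμ, hv, fun k => (hv k).trans ?_⟩
  have h1 : 1 / (ω - 1) ≤ 1 := by
    rw [div_le_one hω1]
    linarith
  calc Λ / ρ * (1 / (ω - 1) + 1) ≤ Λ / ρ * (1 + 1) := by gcongr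
    _ = 2 * Λ / ρ := by ring
end

section
/- (Equivalence of linearized multi-block ADMM on the penalty formulation with SDD, Section 3.4.2.) Let β > 0, γ > 0 and ρ = (1+γ)β. Let {z^k}_{k∈ℕ}, {λ^k}_{k∈ℕ} ⊆ ℝ^m and {v^{k+1}}_{k∈ℕ} ⊆ ℝ^m satisfy z^0 = λ^0 = 0 and, for every k ∈ ℕ: z^{k+1} = (1/(β+ρ))(−λ^k − ρ v^{k+1}) and λ^{k+1} = λ^k + ρ(v^{k+1} + z^{k+1}). Then for every k ∈ ℕ: β z^k + λ^k = 0, and the sequence μ^k := −γ λ^k satisfies μ^{k+1} = (1/(γ+2))(μ^k − γρ v^{k+1}). -/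
/-!
Since `ρ = (1 + γ) β`, one has `β / (β + ρ) = 1 / (γ + 2)`. Substituting the `z`-update into the
multiplier update therefore gives `λ (k + 1) = (1 / (γ + 2)) (λ k + ρ v (k + 1))`, and the
`z`-update says that `β z (k + 1)` is the negative of the same vector. Hence `β z + λ` vanishes
at every iterate, and multiplying the formula for `λ (k + 1)` by `-γ` gives the dual descent step.
-/

/-- the linearized multi-block ADMM applied to the penalty
relaxation realizes the scaled dual descent update (Section 3.4.2). -/
theorem admm_penalty_realizes_sdd
    {m : ℕ} (β γ ρ : ℝ) (hβ : 0 < β) (hγ : 0 < γ) (hρ : ρ = (1 + γ) * β)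
    (z lam v : ℕ → EuclideanSpace ℝ (Fin m))
    (hz0 : z 0 = 0) (hlam0 : lam 0 = 0)
    (hzupd : ∀ k, z (k + 1) = (1 / (β + ρ)) • (-lam k - ρ • v (k + 1)))
    (hlamupd : ∀ k, lam (k + 1) = lam k + ρ • (v (k + 1) + z (k + 1))) :
    (∀ k, β • z k + lam k = 0)
      ∧ (∀ k, (-γ) • lam (k + 1)
          = (1 / (γ + 2)) • ((-γ) • lam k - (γ * ρ) • v (k + 1))) := by
  have hβρ : β + ρ ≠ 0 := by rw [hρ]; positivity
  have hγ2 : γ + 2 ≠ 0 := by positivity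
  -- Eliminating `z (k + 1)` leaves the factor `1 - ρ / (β + ρ) = β / (β + ρ) = 1 / (γ + 2)`.
  have hlam : ∀ k, lam (k + 1) = (1 / (γ + 2)) • (lam k + ρ • v (k + 1)) := by
    intro k
    have hc : ρ * (1 / (β + ρ)) = 1 - 1 / (γ + 2) := by
      field_simp
      rw [hρ]
      ring
    rw [hlamupd k, hzupd k, smul_add, smul_smul, hc]
    module
  refine ⟨fun k => ?_, fun k => ?_⟩
  · cases k with
    | zero => simp [hz0, hlam0]
    | succ k =>
      have hc : β * (1 / (β + ρ)) = 1 / (γ + 2) := by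
        field_simp
        rw [hρ]
        ring
      rw [hlam k, hzupd k, smul_smul, hc]
      module
  · rw [hlam k]
    module
end

section
/- (One-step progress of UDD-ALM, Lemma 4.1.) For every k ∈ ℕ: L_ρ(x^k, μ^k) − L_ρ(x^{k+1}, μ^{k+1}) ≥ ((2θ−1)/2)·L_K·‖x^{k+1} − x^k‖² + ϱ‖Ax^{k+1} − b‖². -/
/-!
Split `L_ρ(·, μ^k)` into `g₀` and its smooth part `K(x) = f(x) + ⟪μ^k, Ax − b⟫ + (ρ/2)‖Ax − b‖²`.
The descent lemma for `f` on the convex set `X`, together with the exact expansion of the quadratic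
term and `‖Ad‖² ≤ ‖A*A‖ ‖d‖²`, bounds `K(x^{k+1})` by its linearization at `x^k` plus
`(L_K/2)‖x^{k+1} − x^k‖²`.  The subproblem is `θ L_K`-strongly convex, so its minimizer `x^{k+1}`
beats `x^k` by a further `(θ L_K/2)‖x^{k+1} − x^k‖²`.  Adding the two gives the first term of
the bound; the dual step, which subtracts `ϱ(Ax^{k+1} − b)` from `μ^k`, gives exactly
the second.
-/

open scoped RealInnerProductSpace BigOperators

noncomputable section

/-- The augmented Lagrangian `L_ρ(x,μ) = f(x) + g₀(x) + ⟨μ, Ax − b⟩ + (ρ/2)‖Ax − b‖²`. -/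
def Lrho {nn mm : ℕ} (f g0 : EuclideanSpace ℝ (Fin nn) → ℝ)
    (A : EuclideanSpace ℝ (Fin nn) →L[ℝ] EuclideanSpace ℝ (Fin mm))
    (b : EuclideanSpace ℝ (Fin mm)) (ρ : ℝ)
    (x : EuclideanSpace ℝ (Fin nn)) (μ : EuclideanSpace ℝ (Fin mm)) : ℝ :=
  f x + g0 x + ⟪μ, A x - b⟫ + ρ / 2 * ‖A x - b‖ ^ 2

/-- Descent lemma on a convex set: an `L`-Lipschitz gradient on `X` gives the quadratic upper model.
The Lipschitz bound is only needed along the segment from `x` to `y`. -/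
lemma descent_on {E : Type*} [NormedAddCommGroup E] [InnerProductSpace ℝ E] [CompleteSpace E]
    {f : E → ℝ} {X : Set E} {L : ℝ} (hX : Convex ℝ X) (hf : Differentiable ℝ f)
    (hL : ∀ x ∈ X, ∀ z ∈ X, ‖gradient f x - gradient f z‖ ≤ L * ‖x - z‖)
    {x y : E} (hx : x ∈ X) (hy : y ∈ X) :
    f y ≤ f x + ⟪gradient f x, y - x⟫ + L / 2 * ‖y - x‖ ^ 2 := by
  set d := y - x with hd
  have hline : ∀ t : ℝ, HasDerivAt (fun s : ℝ => x + s • d) d t := fun t => by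
    simpa using ((hasDerivAt_id t).smul_const d).const_add x
  have hφ : ∀ t : ℝ, HasDerivAt (fun s : ℝ => f (x + s • d)) ⟪gradient f (x + t • d), d⟫ t := by
    intro t
    exact (hf (x + t • d)).hasGradientAt.hasFDerivAt.comp_hasDerivAt t (hline t)
  have hB : ∀ t : ℝ, HasDerivAt
      (fun s : ℝ => f x + s * ⟪gradient f x, d⟫ + L / 2 * ‖d‖ ^ 2 * s ^ 2)
      (⟪gradient f x, d⟫ + L * ‖d‖ ^ 2 * t) t := by
    intro t
    have h := (((hasDerivAt_id t).mul_const ⟪gradient f x, d⟫).const_add (f x)).add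
      (((hasDerivAt_id t).pow 2).const_mul (L / 2 * ‖d‖ ^ 2))
    refine h.congr_deriv ?_
    simp
    ring
  have key := image_le_of_deriv_right_le_deriv_boundary (a := 0) (b := 1)
    (f := fun s : ℝ => f (x + s • d))
    (fun t _ => (hφ t).continuousAt.continuousWithinAt) (fun t _ => (hφ t).hasDerivWithinAt)
    (by simp) (fun t _ => (hB t).continuousAt.continuousWithinAt)
    (fun t _ => (hB t).hasDerivWithinAt) ?_ (Set.right_mem_Icc.2 zero_le_one)
  · simpa [hd] using key
  · intro t ht
    have hmem : x + t • d ∈ X := hX.add_smul_sub_mem hx hy ⟨ht.1, ht.2.le⟩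
    have h1 := hL _ hmem _ hx
    rw [add_sub_cancel_left, norm_smul, Real.norm_of_nonneg ht.1] at h1
    have h2 : ⟪gradient f (x + t • d) - gradient f x, d⟫ ≤ L * (t * ‖d‖) * ‖d‖ :=
      (real_inner_le_norm _ _).trans (mul_le_mul_of_nonneg_right h1 (norm_nonneg _))
    rw [inner_sub_left] at h2
    linarith

/-- Minimizing a convex function plus a linear term plus the proximal term `(c/2)‖· - z‖²` over a
convex set: comparing the minimizer `p` with the prox center `z` alone gives the coefficient `c / 2`;
the curvature of the quadratic term along the segment from `z` to `p` doubles it to `c`. -/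
lemma prox_decrease {E : Type*} [NormedAddCommGroup E] [InnerProductSpace ℝ E]
    {g : E → ℝ} {X : Set E} {c : ℝ} (hX : Convex ℝ X) (hg : ConvexOn ℝ Set.univ g)
    {v z p : E} (hz : z ∈ X) (hp : p ∈ X)
    (hmin : ∀ u ∈ X, g p + ⟪v, p - z⟫ + c / 2 * ‖p - z‖ ^ 2
      ≤ g u + ⟪v, u - z⟫ + c / 2 * ‖u - z‖ ^ 2) :
    g p + ⟪v, p - z⟫ + c * ‖p - z‖ ^ 2 ≤ g z := by
  -- Compare with the point `z + s (p - z)` of the segment and divide by `1 - s`.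
  have hseg : ∀ s : ℝ, 0 ≤ s → s < 1 →
      g p + ⟪v, p - z⟫ + c / 2 * ‖p - z‖ ^ 2 * (1 + s) ≤ g z := by
    intro s hs0 hs1
    have h := hmin _ (hX.add_smul_sub_mem hz hp ⟨hs0, hs1.le⟩)
    have hc : g (z + s • (p - z)) ≤ (1 - s) * g z + s * g p := by
      have h' := hg.2 (Set.mem_univ z) (Set.mem_univ p) (sub_nonneg.2 hs1.le) hs0 (by ring)
      have e : z + s • (p - z) = (1 - s) • z + s • p := by module
      rw [e]
      simpa using h'
    rw [add_sub_cancel_left, inner_smul_right, norm_smul, Real.norm_of_nonneg hs0] at h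
    refine le_of_mul_le_mul_left ?_ (sub_pos.2 hs1)
    nlinarith
  -- Let `s → 1⁻`.
  have hlim : Filter.Tendsto
      (fun s : ℝ => g p + ⟪v, p - z⟫ + c / 2 * ‖p - z‖ ^ 2 * (1 + s))
      (nhdsWithin 1 (Set.Iio 1))
      (nhds (g p + ⟪v, p - z⟫ + c / 2 * ‖p - z‖ ^ 2 * (1 + 1))) :=
    (Continuous.tendsto (by fun_prop) 1).mono_left nhdsWithin_le_nhds
  have hle := le_of_tendsto hlim (b := g z) (by
    filter_upwards [Ioo_mem_nhdsLT (zero_lt_one (α := ℝ))] with s hs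
    exact hseg s hs.1.le hs.2)
  linarith

/-- one-step progress of UDD-ALM (Lemma 4.1). -/
theorem udd_alm_one_step_progress
    {nn mm : ℕ}
    (f g0 : EuclideanSpace ℝ (Fin nn) → ℝ)
    (A : EuclideanSpace ℝ (Fin nn) →L[ℝ] EuclideanSpace ℝ (Fin mm))
    (b : EuclideanSpace ℝ (Fin mm))
    (X : Set (EuclideanSpace ℝ (Fin nn)))
    (hXne : X.Nonempty) (hXconv : Convex ℝ X) (hXcomp : IsCompact X)
    (hg0conv : ConvexOn ℝ Set.univ g0) (hg0cont : Continuous g0)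
    (Lf ρ ϱ θ : ℝ) (hLf : 0 < Lf) (hρ : 0 ≤ ρ) (hϱ : 0 < ϱ) (hθ : 1 < θ)
    (hfd : Differentiable ℝ f)
    (hfLip : ∀ x ∈ X, ∀ z ∈ X, ‖gradient f x - gradient f z‖ ≤ Lf * ‖x - z‖)
    (LK : ℝ) (hLK : LK = Lf + ρ * ‖(ContinuousLinearMap.adjoint A).comp A‖)
    (x : ℕ → EuclideanSpace ℝ (Fin nn)) (μ : ℕ → EuclideanSpace ℝ (Fin mm))
    (hxX : ∀ k, x k ∈ X)
    (hxmin : ∀ (k : ℕ), ∀ u ∈ X,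
      g0 (x (k+1))
        + ⟪gradient f (x k) + (ContinuousLinearMap.adjoint A) (μ k + ρ • (A (x k) - b)),
            x (k+1) - x k⟫
        + θ * LK / 2 * ‖x (k+1) - x k‖ ^ 2
      ≤ g0 u
        + ⟪gradient f (x k) + (ContinuousLinearMap.adjoint A) (μ k + ρ • (A (x k) - b)),
            u - x k⟫
        + θ * LK / 2 * ‖u - x k‖ ^ 2)
    (hμupd : ∀ k, μ (k+1) = μ k - ϱ • (A (x (k+1)) - b))
    (k : ℕ) :
    Lrho f g0 A b ρ (x k) (μ k) - Lrho f g0 A b ρ (x (k+1)) (μ (k+1))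
      ≥ (2 * θ - 1) / 2 * LK * ‖x (k+1) - x k‖ ^ 2 + ϱ * ‖A (x (k+1)) - b‖ ^ 2 := by
  have hdesc := descent_on hXconv hfd hfLip (hxX k) (hxX (k + 1))
  have hprox := prox_decrease hXconv hg0conv (hxX k) (hxX (k + 1)) (hxmin k)
  have hA : ‖A (x (k+1) - x k)‖ ^ 2
      ≤ ‖(ContinuousLinearMap.adjoint A).comp A‖ * ‖x (k+1) - x k‖ ^ 2 := by
    have h : ‖A (x (k+1) - x k)‖ ^ 2
        = ⟪((ContinuousLinearMap.adjoint A).comp A) (x (k+1) - x k), x (k+1) - x k⟫ := by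
      rw [ContinuousLinearMap.comp_apply, ContinuousLinearMap.adjoint_inner_left,
        real_inner_self_eq_norm_sq]
    rw [h, pow_two, ← mul_assoc]
    refine (real_inner_le_norm _ _).trans ?_
    exact mul_le_mul_of_nonneg_right (ContinuousLinearMap.le_opNorm _ _) (norm_nonneg _)
  have hρA := mul_le_mul_of_nonneg_left hA (div_nonneg hρ zero_le_two)
  have hres : A (x (k+1)) - b = (A (x k) - b) + A (x (k+1) - x k) := by
    rw [map_sub]; abel
  have hdual : ⟪μ (k+1), A (x (k+1)) - b⟫
      = ⟪μ k, A (x (k+1)) - b⟫ - ϱ * ‖A (x (k+1)) - b‖ ^ 2 := by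
    rw [hμupd k, inner_sub_left, real_inner_smul_left, real_inner_self_eq_norm_sq]
  have hlin : ⟪μ k, A (x (k+1)) - b⟫
      = ⟪μ k, A (x k) - b⟫ + ⟪μ k, A (x (k+1) - x k)⟫ := by
    rw [hres, inner_add_right]
  have hquad : ‖A (x (k+1)) - b‖ ^ 2 = ‖A (x k) - b‖ ^ 2
      + 2 * ⟪A (x k) - b, A (x (k+1) - x k)⟫ + ‖A (x (k+1) - x k)‖ ^ 2 := by
    rw [hres, norm_add_sq_real]
  rw [inner_add_left, ContinuousLinearMap.adjoint_inner_left, inner_add_left,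
    real_inner_smul_left] at hprox
  unfold Lrho
  rw [hdual, hlin]
  have hquadρ := congrArg (fun r => ρ / 2 * r) hquad
  subst hLK
  linarith
end
end

section
/- (Bound on dual residual in UDD-ALM, Lemma 4.2.) For every k ∈ ℕ there exists ξ ∈ ℝ^n with ‖ξ‖ ≤ (θ+1)L_K‖x^{k+1} − x^k‖ + (ρ+ϱ)‖A‖·‖Ax^{k+1} − b‖ such that −∇f(x^{k+1}) − Aᵀμ^{k+1} − ξ is a subgradient of g_0 + δ_X at x^{k+1}, i.e., for all x ∈ X: g_0(x) ≥ g_0(x^{k+1}) + ⟨−∇f(x^{k+1}) − Aᵀμ^{k+1} − ξ, x − x^{k+1}⟩. -/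
/-!
The iterate `x (k+1)` minimizes a convex function plus a linear term and a quadratic proximal term
over `X`, so it satisfies the first-order variational inequality
`g0 u ≥ g0 p + ⟪-c - (θ * LK) • (p - x k), u - p⟫` with `p = x (k+1)` and `c` the linear
coefficient (`subgradient_of_prox_min`). Taking `ξ` to be the vector that turns this into the
claimed subgradient inequality, and inserting the multiplier update, one finds
`ξ = (∇f(x k) - ∇f(p)) + (ρ + ϱ) A†(A p - b) - ρ A†A (p - x k) + θ LK (p - x k)`,
whose terms are bounded separately by the triangle inequality.
-/

open scoped RealInnerProductSpace BigOperators

noncomputable section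

/-- First-order optimality for a proximal step: comparing a minimizer `p` with the points
`p + t • (u - p)` and letting `t → 0⁺` removes the second-order term in `u - p`. -/
theorem subgradient_of_prox_min {E : Type*} [NormedAddCommGroup E] [InnerProductSpace ℝ E]
    {g : E → ℝ} {X : Set E} (hX : Convex ℝ X) (hg : ConvexOn ℝ Set.univ g)
    {c z p : E} {a : ℝ} (hp : p ∈ X)
    (hmin : ∀ u ∈ X, g p + ⟪c, p - z⟫ + a / 2 * ‖p - z‖ ^ 2
      ≤ g u + ⟪c, u - z⟫ + a / 2 * ‖u - z‖ ^ 2)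
    {u : E} (hu : u ∈ X) :
    g p + ⟪-c - a • (p - z), u - p⟫ ≤ g u := by
  have key : ∀ t : ℝ, 0 < t → t ≤ 1 →
      0 ≤ (g u - g p + ⟪c, u - p⟫ + a * ⟪p - z, u - p⟫) + t * (a / 2 * ‖u - p‖ ^ 2) := by
    intro t ht ht1
    have hw : (1 - t) • p + t • u = p + t • (u - p) := by module
    have hc := hg.2 (Set.mem_univ p) (Set.mem_univ u) (sub_nonneg.2 ht1) ht.le (by ring)
    have hm := hmin _ (hX hp hu (sub_nonneg.2 ht1) ht.le (by ring))
    rw [hw] at hc hm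
    have hd : p + t • (u - p) - z = (p - z) + t • (u - p) := by abel
    rw [hd, norm_add_sq_real, inner_add_right, real_inner_smul_right, real_inner_smul_right,
      norm_smul, mul_pow, Real.norm_eq_abs, sq_abs] at hm
    simp only [smul_eq_mul] at hc
    refine nonneg_of_mul_nonneg_right ?_ ht
    linarith
  have hlim : Filter.Tendsto
      (fun t : ℝ => (g u - g p + ⟪c, u - p⟫ + a * ⟪p - z, u - p⟫) + t * (a / 2 * ‖u - p‖ ^ 2))
      (nhdsWithin 0 (Set.Ioi 0))
      (nhds ((g u - g p + ⟪c, u - p⟫ + a * ⟪p - z, u - p⟫) + 0 * (a / 2 * ‖u - p‖ ^ 2))) :=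
    (Continuous.tendsto (by fun_prop) 0).mono_left nhdsWithin_le_nhds
  have h0 := ge_of_tendsto hlim (b := 0) (by
    filter_upwards [Ioc_mem_nhdsGT (zero_lt_one (α := ℝ))] with t ht using key t ht.1 ht.2)
  rw [inner_sub_left, inner_neg_left, real_inner_smul_left]
  linarith

/-- bound on dual residual in UDD-ALM (Lemma 4.2). -/
theorem udd_alm_dual_residual_bound
    {nn mm : ℕ}
    (f g0 : EuclideanSpace ℝ (Fin nn) → ℝ)
    (A : EuclideanSpace ℝ (Fin nn) →L[ℝ] EuclideanSpace ℝ (Fin mm))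
    (b : EuclideanSpace ℝ (Fin mm))
    (X : Set (EuclideanSpace ℝ (Fin nn)))
    (hXne : X.Nonempty) (hXconv : Convex ℝ X) (hXcomp : IsCompact X)
    (hg0conv : ConvexOn ℝ Set.univ g0) (hg0cont : Continuous g0)
    (Lf ρ ϱ θ : ℝ) (hLf : 0 < Lf) (hρ : 0 ≤ ρ) (hϱ : 0 < ϱ) (hθ : 1 < θ)
    (hfd : Differentiable ℝ f)
    (hfLip : ∀ x ∈ X, ∀ z ∈ X, ‖gradient f x - gradient f z‖ ≤ Lf * ‖x - z‖)
    (LK : ℝ) (hLK : LK = Lf + ρ * ‖(ContinuousLinearMap.adjoint A).comp A‖)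
    (x : ℕ → EuclideanSpace ℝ (Fin nn)) (μ : ℕ → EuclideanSpace ℝ (Fin mm))
    (hxX : ∀ k, x k ∈ X)
    (hxmin : ∀ (k : ℕ), ∀ u ∈ X,
      g0 (x (k+1))
        + ⟪gradient f (x k) + (ContinuousLinearMap.adjoint A) (μ k + ρ • (A (x k) - b)),
            x (k+1) - x k⟫
        + θ * LK / 2 * ‖x (k+1) - x k‖ ^ 2
      ≤ g0 u
        + ⟪gradient f (x k) + (ContinuousLinearMap.adjoint A) (μ k + ρ • (A (x k) - b)),
            u - x k⟫
        + θ * LK / 2 * ‖u - x k‖ ^ 2)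
    (hμupd : ∀ k, μ (k+1) = μ k - ϱ • (A (x (k+1)) - b))
    (k : ℕ) :
    ∃ ξ : EuclideanSpace ℝ (Fin nn),
      ‖ξ‖ ≤ (θ + 1) * LK * ‖x (k+1) - x k‖ + (ρ + ϱ) * ‖A‖ * ‖A (x (k+1)) - b‖
      ∧ ∀ u ∈ X,
          g0 u ≥ g0 (x (k+1))
            + ⟪-gradient f (x (k+1)) - (ContinuousLinearMap.adjoint A) (μ (k+1)) - ξ,
                u - x (k+1)⟫ := by
  have hLK0 : 0 ≤ LK := by rw [hLK]; positivity
  set p := x (k+1) with hp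
  set T := ContinuousLinearMap.adjoint A with hT
  refine ⟨(gradient f (x k) - gradient f p) + (ρ + ϱ) • T (A p - b)
    - ρ • (T.comp A) (p - x k) + (θ * LK) • (p - x k), ?_, ?_⟩
  · have h1 : ‖gradient f (x k) - gradient f p‖ ≤ Lf * ‖p - x k‖ := by
      rw [norm_sub_rev p]; exact hfLip _ (hxX k) _ (hxX (k+1))
    have h2 : ‖(ρ + ϱ) • T (A p - b)‖ ≤ (ρ + ϱ) * (‖A‖ * ‖A p - b‖) := by
      rw [norm_smul, Real.norm_of_nonneg (by positivity)]
      gcongr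
      have := T.le_opNorm (A p - b)
      rwa [hT, LinearIsometryEquiv.norm_map] at this
    have h3 : ‖ρ • (T.comp A) (p - x k)‖ ≤ ρ * (‖T.comp A‖ * ‖p - x k‖) := by
      rw [norm_smul, Real.norm_of_nonneg hρ]
      gcongr
      exact (T.comp A).le_opNorm _
    have h4 : ‖(θ * LK) • (p - x k)‖ = θ * LK * ‖p - x k‖ := by
      rw [norm_smul, Real.norm_of_nonneg (by positivity)]
    have h5 : LK * ‖p - x k‖ = Lf * ‖p - x k‖ + ρ * (‖T.comp A‖ * ‖p - x k‖) := by
      rw [hLK]; ring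
    refine (norm_add_le _ _).trans ?_
    have h6 := norm_sub_le ((gradient f (x k) - gradient f p) + (ρ + ϱ) • T (A p - b))
      (ρ • (T.comp A) (p - x k))
    have h7 := norm_add_le (gradient f (x k) - gradient f p) ((ρ + ϱ) • T (A p - b))
    linarith
  · intro u hu
    have h := subgradient_of_prox_min hXconv hg0conv (hxX (k+1)) (hxmin k) hu
    refine ge_iff_le.2 (le_of_eq_of_le ?_ h)
    congr 2
    rw [hμupd k]
    simp only [ContinuousLinearMap.comp_apply, map_sub, map_add, map_smul, ← hp]
    module
end
end

section
/- (Telescoped bound for UDD-ALM, inequality (4.13) in the proof of Theorem 4.4.) Let K ≥ 1 be an integer and ℓ ∈ ℝ be such that L_ρ(x^k, μ^k) ≥ ℓ for all k ∈ {0,…,K}. Then min{((2θ−1)/2)L_K, ϱ} · Σ_{k=0}^{K−1} (‖x^{k+1} − x^k‖² + ‖Ax^{k+1} − b‖²) ≤ L_ρ(x^0, μ^0) − ℓ. -/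
/-!
The augmented Lagrangian decreases along the iterates by at least
`(2θ - 1)/2 * LK * ‖x (k+1) - x k‖² + ϱ * ‖A x (k+1) - b‖²` per step; summing over `k < K` and
using the lower bound `ℓ` at index `K` gives the claim. The decrease combines three facts.

* The proximal subproblem has a `θ * LK`-strongly convex objective, so comparing its minimizer with
  the feasible point `x k` gains an extra `θ * LK / 2 * ‖x (k+1) - x k‖²` (`prox_step_gain`).
* The smooth part `f + ⟪μ, A · - b⟫ + ρ/2 ‖A · - b‖²` satisfies the descent lemma with constant
  `LK` on `X` (`descent_lemma` for `f`, and `‖A d‖² ≤ ‖A†A‖ ‖d‖²` for the quadratic).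
* The update of `μ` lowers the multiplier term by exactly `ϱ * ‖A x (k+1) - b‖²`.
-/

open scoped RealInnerProductSpace BigOperators

noncomputable section

/-- Descent lemma on a convex set `X`: the gradient only needs to be Lipschitz on `X`, because the
segment from `x` to `y` stays there. -/
lemma descent_lemma {E : Type*} [NormedAddCommGroup E] [InnerProductSpace ℝ E] [CompleteSpace E]
    {f : E → ℝ} {X : Set E} {L : ℝ} (hX : Convex ℝ X) (hfd : Differentiable ℝ f)
    (hLip : ∀ x ∈ X, ∀ z ∈ X, ‖gradient f x - gradient f z‖ ≤ L * ‖x - z‖)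
    {x y : E} (hx : x ∈ X) (hy : y ∈ X) :
    f y ≤ f x + ⟪gradient f x, y - x⟫ + L / 2 * ‖y - x‖ ^ 2 := by
  set d := y - x with hd
  -- `h` measures the gap in the claim along the segment; it suffices that it is antitone.
  let h : ℝ → ℝ := fun t => f (x + t • d) - t * ⟪gradient f x, d⟫ - t ^ 2 * (L / 2 * ‖d‖ ^ 2)
  have hder : ∀ t : ℝ, HasDerivAt h
      (⟪gradient f (x + t • d), d⟫ - ⟪gradient f x, d⟫ - 2 * t * (L / 2 * ‖d‖ ^ 2)) t := by
    intro t
    have h1 : HasDerivAt (fun t : ℝ => x + t • d) d t := by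
      simpa using ((hasDerivAt_id t).smul_const d).const_add x
    have h2 : HasDerivAt (fun t : ℝ => f (x + t • d)) ⟪gradient f (x + t • d), d⟫ t := by
      have h3 := (hfd (x + t • d)).hasGradientAt.hasFDerivAt.comp_hasDerivAt t h1
      simpa [Function.comp_def] using h3
    have h4 : HasDerivAt (fun t : ℝ => t * ⟪gradient f x, d⟫) ⟪gradient f x, d⟫ t := by
      simpa using (hasDerivAt_id t).mul_const ⟪gradient f x, d⟫
    have h5 : HasDerivAt (fun t : ℝ => t ^ 2 * (L / 2 * ‖d‖ ^ 2))
        (2 * t * (L / 2 * ‖d‖ ^ 2)) t := by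
      simpa using (hasDerivAt_pow 2 t).mul_const (L / 2 * ‖d‖ ^ 2)
    exact (h2.sub h4).sub h5
  have hanti : AntitoneOn h (Set.Icc 0 1) := by
    refine antitoneOn_of_deriv_nonpos (convex_Icc 0 1)
      (fun t _ => (hder t).continuousAt.continuousWithinAt)
      (fun t _ => (hder t).differentiableAt.differentiableWithinAt) ?_
    intro t ht
    rw [interior_Icc] at ht
    rw [(hder t).deriv, ← inner_sub_left]
    have hmem : x + t • d ∈ X := hX.add_smul_sub_mem hx hy ⟨ht.1.le, ht.2.le⟩
    have h1 := hLip _ hmem _ hx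
    rw [add_sub_cancel_left, norm_smul, Real.norm_of_nonneg ht.1.le] at h1
    have h2 := real_inner_le_norm (gradient f (x + t • d) - gradient f x) d
    have h3 := mul_le_mul_of_nonneg_right h1 (norm_nonneg d)
    nlinarith
  have h01 := hanti (Set.left_mem_Icc.2 zero_le_one) (Set.right_mem_Icc.2 zero_le_one) zero_le_one
  simp only [h, hd, one_smul, zero_smul, add_sub_cancel, add_zero] at h01
  linarith

/-- The minimizer `y` of a convex function plus the proximal term `c / 2 * ‖· - x‖²` over `X ∋ x`
gains twice the proximal term over `x`, by strong convexity. No subgradients are needed: `y` is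
compared with the points `y + t • (x - y)` as `t → 0`. -/
lemma prox_step_gain {E : Type*} [NormedAddCommGroup E] [InnerProductSpace ℝ E]
    {g : E → ℝ} {X : Set E} {c : ℝ} (hX : Convex ℝ X) (hg : ConvexOn ℝ Set.univ g)
    {x y G : E} (hx : x ∈ X) (hy : y ∈ X)
    (hmin : ∀ u ∈ X, g y + ⟪G, y - x⟫ + c / 2 * ‖y - x‖ ^ 2
      ≤ g u + ⟪G, u - x⟫ + c / 2 * ‖u - x‖ ^ 2) :
    g y + ⟪G, y - x⟫ + c * ‖y - x‖ ^ 2 ≤ g x := by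
  have key : ∀ t ∈ Set.Ioo (0 : ℝ) 1,
      g y + ⟪G, y - x⟫ + c * ‖y - x‖ ^ 2 - g x ≤ t * (c / 2 * ‖y - x‖ ^ 2) := by
    intro t ht
    have h1 := hmin _ (hX hy hx (sub_nonneg.2 ht.2.le) ht.1.le (by ring))
    have h2 := hg.2 (Set.mem_univ y) (Set.mem_univ x) (sub_nonneg.2 ht.2.le) ht.1.le (by ring)
    have h3 : (1 - t) • y + t • x - x = (1 - t) • (y - x) := by module
    rw [h3, inner_smul_right, norm_smul, mul_pow, Real.norm_eq_abs, sq_abs] at h1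
    simp only [smul_eq_mul] at h2
    refine le_of_mul_le_mul_left ?_ ht.1
    nlinarith
  have hlim : Filter.Tendsto (fun t : ℝ => t * (c / 2 * ‖y - x‖ ^ 2))
      (nhdsWithin 0 (Set.Ioi 0)) (nhds 0) := by
    have : Continuous (fun t : ℝ => t * (c / 2 * ‖y - x‖ ^ 2)) := by fun_prop
    simpa using (this.tendsto 0).mono_left nhdsWithin_le_nhds
  have := ge_of_tendsto hlim
    (Filter.eventually_of_mem (Ioo_mem_nhdsGT (zero_lt_one' ℝ)) key)
  linarith

lemma norm_apply_sq_le_adjoint_comp {E F : Type*} [NormedAddCommGroup E] [InnerProductSpace ℝ E]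
    [CompleteSpace E] [NormedAddCommGroup F] [InnerProductSpace ℝ F] [CompleteSpace F]
    (A : E →L[ℝ] F) (d : E) :
    ‖A d‖ ^ 2 ≤ ‖(ContinuousLinearMap.adjoint A).comp A‖ * ‖d‖ ^ 2 := by
  rw [ContinuousLinearMap.norm_adjoint_comp_self, ← sq, ← mul_pow]
  exact pow_le_pow_left₀ (norm_nonneg _) (A.le_opNorm d) 2

/-- telescoped bound for UDD-ALM (inequality (4.13)). -/
theorem udd_alm_telescoped_bound
    {nn mm : ℕ}
    (f g0 : EuclideanSpace ℝ (Fin nn) → ℝ)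
    (A : EuclideanSpace ℝ (Fin nn) →L[ℝ] EuclideanSpace ℝ (Fin mm))
    (b : EuclideanSpace ℝ (Fin mm))
    (X : Set (EuclideanSpace ℝ (Fin nn)))
    (hXne : X.Nonempty) (hXconv : Convex ℝ X) (hXcomp : IsCompact X)
    (hg0conv : ConvexOn ℝ Set.univ g0) (hg0cont : Continuous g0)
    (Lf ρ ϱ θ : ℝ) (hLf : 0 < Lf) (hρ : 0 ≤ ρ) (hϱ : 0 < ϱ) (hθ : 1 < θ)
    (hfd : Differentiable ℝ f)
    (hfLip : ∀ x ∈ X, ∀ z ∈ X, ‖gradient f x - gradient f z‖ ≤ Lf * ‖x - z‖)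
    (LK : ℝ) (hLK : LK = Lf + ρ * ‖(ContinuousLinearMap.adjoint A).comp A‖)
    (x : ℕ → EuclideanSpace ℝ (Fin nn)) (μ : ℕ → EuclideanSpace ℝ (Fin mm))
    (hxX : ∀ k, x k ∈ X)
    (hxmin : ∀ (k : ℕ), ∀ u ∈ X,
      g0 (x (k+1))
        + ⟪gradient f (x k) + (ContinuousLinearMap.adjoint A) (μ k + ρ • (A (x k) - b)),
            x (k+1) - x k⟫
        + θ * LK / 2 * ‖x (k+1) - x k‖ ^ 2
      ≤ g0 u
        + ⟪gradient f (x k) + (ContinuousLinearMap.adjoint A) (μ k + ρ • (A (x k) - b)),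
            u - x k⟫
        + θ * LK / 2 * ‖u - x k‖ ^ 2)
    (hμupd : ∀ k, μ (k+1) = μ k - ϱ • (A (x (k+1)) - b))
    (K : ℕ) (hK : 1 ≤ K) (ℓ : ℝ)
    (hlb : ∀ k ≤ K, ℓ ≤ Lrho f g0 A b ρ (x k) (μ k)) :
    min ((2 * θ - 1) / 2 * LK) ϱ
        * ∑ k ∈ Finset.range K, (‖x (k+1) - x k‖ ^ 2 + ‖A (x (k+1)) - b‖ ^ 2)
      ≤ Lrho f g0 A b ρ (x 0) (μ 0) - ℓ := by
  have step : ∀ k, min ((2 * θ - 1) / 2 * LK) ϱ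
      * (‖x (k+1) - x k‖ ^ 2 + ‖A (x (k+1)) - b‖ ^ 2)
      ≤ Lrho f g0 A b ρ (x k) (μ k) - Lrho f g0 A b ρ (x (k+1)) (μ (k+1)) := by
    intro k
    have h1 := prox_step_gain hXconv hg0conv (hxX k) (hxX (k+1)) (hxmin k)
    have h2 := descent_lemma hXconv hfd hfLip (hxX k) (hxX (k+1))
    have h3 := mul_le_mul_of_nonneg_left
      (norm_apply_sq_le_adjoint_comp A (x (k+1) - x k)) hρ
    have h4 := mul_le_mul_of_nonneg_right (min_le_left ((2 * θ - 1) / 2 * LK) ϱ)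
      (sq_nonneg ‖x (k+1) - x k‖)
    have h5 := mul_le_mul_of_nonneg_right (min_le_right ((2 * θ - 1) / 2 * LK) ϱ)
      (sq_nonneg ‖A (x (k+1)) - b‖)
    have hr : A (x (k+1)) - b = (A (x k) - b) + A (x (k+1) - x k) := by
      rw [map_sub]; abel
    have h6 : ‖A (x (k+1)) - b‖ ^ 2 = ‖A (x k) - b‖ ^ 2
        + 2 * ⟪A (x k) - b, A (x (k+1) - x k)⟫ + ‖A (x (k+1) - x k)‖ ^ 2 := by
      rw [hr]; exact norm_add_sq_real _ _
    have h7 : ⟪μ k, A (x (k+1)) - b⟫ = ⟪μ k, A (x k) - b⟫ + ⟪μ k, A (x (k+1) - x k)⟫ := by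
      rw [hr, inner_add_right]
    have h8 : ⟪μ (k+1), A (x (k+1)) - b⟫
        = ⟪μ k, A (x (k+1)) - b⟫ - ϱ * ‖A (x (k+1)) - b‖ ^ 2 := by
      rw [hμupd k, inner_sub_left, real_inner_smul_left, real_inner_self_eq_norm_sq]
    rw [inner_add_left, ContinuousLinearMap.adjoint_inner_left, inner_add_left,
      real_inner_smul_left] at h1
    -- The quadratic term's share of the descent inequality, with `‖A†A‖` eliminated through `LK`.
    have h9 : ρ / 2 * ‖A (x (k+1) - x k)‖ ^ 2 ≤ (LK - Lf) / 2 * ‖x (k+1) - x k‖ ^ 2 := by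
      rw [hLK]; linarith
    have h10 : ρ / 2 * ‖A (x (k+1)) - b‖ ^ 2 = ρ / 2 * ‖A (x k) - b‖ ^ 2
        + ρ * ⟪A (x k) - b, A (x (k+1) - x k)⟫ + ρ / 2 * ‖A (x (k+1) - x k)‖ ^ 2 := by
      rw [h6]; ring
    simp only [Lrho]
    rw [h8, h7, h10]
    linarith
  calc _ ≤ ∑ k ∈ Finset.range K,
        (Lrho f g0 A b ρ (x k) (μ k) - Lrho f g0 A b ρ (x (k+1)) (μ (k+1))) := by
        rw [Finset.mul_sum]
        exact Finset.sum_le_sum fun k _ => step k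
    _ = Lrho f g0 A b ρ (x 0) (μ 0) - Lrho f g0 A b ρ (x K) (μ K) :=
        Finset.sum_range_sub' (fun k => Lrho f g0 A b ρ (x k) (μ k)) K
    _ ≤ _ := sub_le_sub_left (hlb K le_rfl) _
end
end

section
/- (Dual boundedness for UDD-ALM with nonlinear constraints under LICQ, Lemma 4.6.) Let {k_r}_{r∈ℕ} be a strictly increasing sequence of integers with k_r ≥ 1 such that x^{k_r} → x* ∈ X as r → ∞. Let I(x*) = {l ∈ {1,…,L} : q_l(x*) = 0} and suppose the matrix H* = [∇h_1(x*),…,∇h_m(x*), (∇q_l(x*))_{l∈I(x*)}] ∈ ℝ^{n×(m+|I(x*)|)} has linearly independent columns. Then the sequence {μ^{k_r}}_{r∈ℕ} is bounded. -/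
/-! The stationarity condition at `x^{k+1}` says that the pair
`z = (μ^k + ρ h(x^{k+1}), (y_l^{k+1})_{l ∈ I(x*)})` solves a linear system whose operator is
`constraintOp` at `x^{k+1}`, once the multipliers of constraints inactive at `x*` vanish. They do
vanish along the subsequence from some index on, by complementarity and continuity of `q_l`. The
right-hand side is bounded because `X` is compact and subgradients of a continuous convex function
are bounded on compact sets (`subgradient_bound`). LICQ says that the operator at `x*` is injective
(`constraintOp_injective`), so operators near it are bounded below by a common constant
(`eventually_norm_le_of_injective`), which bounds `z`. Finally `μ^{k+1}` differs from the first
component of `z` by a multiple of the bounded vector `h(x^{k+1})`.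
-/

open scoped RealInnerProductSpace BigOperators

noncomputable section

/-- The augmented Lagrangian `L_ρ(x,μ) = f(x) + g₀(x) + ⟨μ, h(x)⟩ + (ρ/2)‖h(x)‖²`. -/
def LrhoNL {nn mm : ℕ} (f g0 : EuclideanSpace ℝ (Fin nn) → ℝ)
    (h : EuclideanSpace ℝ (Fin nn) → EuclideanSpace ℝ (Fin mm)) (ρ : ℝ)
    (x : EuclideanSpace ℝ (Fin nn)) (μ : EuclideanSpace ℝ (Fin mm)) : ℝ :=
  f x + g0 x + ⟪μ, h x⟫ + ρ / 2 * ‖h x‖ ^ 2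

open Filter Topology

/-- Injectivity of a limit operator on a finite-dimensional space gives a lower bound that is
uniform along the convergent family: an antilipschitz constant `K` of the limit degrades at most
to `2 * K` once the operators are within `1 / (2 * K)` of the limit. -/
lemma eventually_norm_le_of_injective {E F ι : Type*} [NormedAddCommGroup E] [NormedSpace ℝ E]
    [FiniteDimensional ℝ E] [NormedAddCommGroup F] [NormedSpace ℝ F] {l : Filter ι}
    {A : ι → E →L[ℝ] F} {A₀ : E →L[ℝ] F} (hA : Tendsto A l (𝓝 A₀))
    (hinj : Function.Injective A₀) :
    ∃ K : ℝ, 0 < K ∧ ∀ᶠ i in l, ∀ z, ‖z‖ ≤ K * ‖A i z‖ := by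
  obtain ⟨K, hK, hanti⟩ := A₀.toLinearMap.exists_antilipschitzWith (LinearMap.ker_eq_bot.2 hinj)
  have hKpos : (0 : ℝ) < K := hK
  refine ⟨2 * K, by positivity, ?_⟩
  have hclose := (Metric.tendsto_nhds.1 hA) (1 / (2 * K)) (by positivity)
  filter_upwards [hclose] with i hi z
  have h1 : ‖z‖ ≤ K * ‖A₀ z‖ := by
    simpa using hanti.le_mul_dist z 0
  have h2 : ‖(A i - A₀) z‖ ≤ 1 / (2 * K) * ‖z‖ := by
    refine ((A i - A₀).le_opNorm z).trans ?_
    rw [dist_eq_norm] at hi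
    gcongr
  have h3 : ‖A₀ z‖ ≤ ‖A i z‖ + 1 / (2 * K) * ‖z‖ := by
    have : A₀ z = A i z - (A i - A₀) z := by simp
    rw [this]
    exact (norm_sub_le _ _).trans (by gcongr)
  have h4 : (K : ℝ) * ‖A₀ z‖ ≤ K * ‖A i z‖ + ‖z‖ / 2 := by
    calc (K : ℝ) * ‖A₀ z‖ ≤ K * (‖A i z‖ + 1 / (2 * K) * ‖z‖) := by gcongr
      _ = K * ‖A i z‖ + ‖z‖ / 2 := by field_simp
  linarith

/-- Subgradients of a continuous function at points of a compact set are bounded: testing the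
subgradient inequality at distance one in the direction of the subgradient `v` bounds `‖v‖` by an
oscillation of `g`. -/
lemma subgradient_bound {F : Type*} [NormedAddCommGroup F] [InnerProductSpace ℝ F]
    [FiniteDimensional ℝ F] {g : F → ℝ} (hg : Continuous g) {X : Set F} (hX : IsCompact X) :
    ∃ M : ℝ, ∀ p ∈ X, ∀ v : F, (∀ u, g u ≥ g p + ⟪v, u - p⟫) → ‖v‖ ≤ M := by
  have : ProperSpace F := FiniteDimensional.proper ℝ F
  obtain ⟨B, hB⟩ := (hX.cthickening (r := 1)).exists_bound_of_continuousOn hg.continuousOn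
  refine ⟨2 * B, fun p hp v hv => ?_⟩
  have hpB := hB p (Metric.self_subset_cthickening X hp)
  rcases eq_or_ne v 0 with rfl | hv0
  · have := norm_nonneg (g p)
    simp only [norm_zero]
    linarith
  have hn : ‖v‖ ≠ 0 := norm_ne_zero_iff.2 hv0
  have huB := hB (p + ‖v‖⁻¹ • v) <| Metric.mem_cthickening_of_dist_le _ p _ _ hp <| by
    simp [dist_eq_norm, norm_smul, hn]
  have hsub := hv (p + ‖v‖⁻¹ • v)
  have hin : ⟪v, p + ‖v‖⁻¹ • v - p⟫ = ‖v‖ := by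
    rw [add_sub_cancel_left, real_inner_smul_right, real_inner_self_eq_norm_sq]
    field_simp
  rw [hin] at hsub
  rw [Real.norm_eq_abs] at hpB huB
  linarith [(abs_le.1 hpB).1, (abs_le.1 huB).2]

lemma continuous_gradient_of_contDiff {F : Type*} [NormedAddCommGroup F] [InnerProductSpace ℝ F]
    [CompleteSpace F] {f : F → ℝ} (hf : ContDiff ℝ 1 f) : Continuous (gradient f) :=
  (InnerProductSpace.toDual ℝ F).symm.continuous.comp (hf.continuous_fderiv one_ne_zero)

/-- The operator `(w, y) ↦ ∇h(x) w + ∑_{l ∈ I} y_l ∇q_l(x)`, whose matrix has as columns the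
gradients at `x` of the equality constraints and of the inequality constraints indexed by `I`.
The index set `I = {l | P l}` is kept fixed while `x` varies. -/
def constraintOp {nn mm L : ℕ} (q : Fin L → EuclideanSpace ℝ (Fin nn) → ℝ)
    (h : EuclideanSpace ℝ (Fin nn) → EuclideanSpace ℝ (Fin mm)) (P : Fin L → Prop)
    [DecidablePred P] (x : EuclideanSpace ℝ (Fin nn)) :
    (EuclideanSpace ℝ (Fin mm) × ({l // P l} → ℝ)) →L[ℝ] EuclideanSpace ℝ (Fin nn) :=
  (ContinuousLinearMap.adjoint (fderiv ℝ h x)).comp (ContinuousLinearMap.fst ℝ _ _)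
    + ∑ l : {l // P l}, ((ContinuousLinearMap.proj (R := ℝ) (φ := fun _ => ℝ) l).comp
        (ContinuousLinearMap.snd ℝ _ _)).smulRight (gradient (q l) x)

lemma constraintOp_apply {nn mm L : ℕ} (q : Fin L → EuclideanSpace ℝ (Fin nn) → ℝ)
    (h : EuclideanSpace ℝ (Fin nn) → EuclideanSpace ℝ (Fin mm)) (P : Fin L → Prop)
    [DecidablePred P] (x : EuclideanSpace ℝ (Fin nn))
    (z : EuclideanSpace ℝ (Fin mm) × ({l // P l} → ℝ)) :
    constraintOp q h P x z = ContinuousLinearMap.adjoint (fderiv ℝ h x) z.1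
      + ∑ l : {l // P l}, z.2 l • gradient (q l) x := by
  simp [constraintOp]

lemma continuous_constraintOp {nn mm L : ℕ} {q : Fin L → EuclideanSpace ℝ (Fin nn) → ℝ}
    (hq : ∀ l, ContDiff ℝ 1 (q l))
    {h : EuclideanSpace ℝ (Fin nn) → EuclideanSpace ℝ (Fin mm)} (hh : ContDiff ℝ 1 h)
    (P : Fin L → Prop) [DecidablePred P] : Continuous (constraintOp q h P) := by
  unfold constraintOp
  have hadj : Continuous fun x => ContinuousLinearMap.adjoint (fderiv ℝ h x) :=
    ContinuousLinearMap.adjoint.continuous.comp (hh.continuous_fderiv one_ne_zero)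
  refine (hadj.clm_comp continuous_const).add (continuous_finsetSum _ fun l _ => ?_)
  exact (ContinuousLinearMap.smulRightL ℝ _ _ _).continuous.comp
    (continuous_gradient_of_contDiff (hq l))

/-- The linear independence constraint qualification, read as injectivity of `constraintOp`. -/
lemma constraintOp_injective {nn mm L : ℕ} {q : Fin L → EuclideanSpace ℝ (Fin nn) → ℝ}
    {h : EuclideanSpace ℝ (Fin nn) → EuclideanSpace ℝ (Fin mm)}
    {P : Fin L → Prop} [DecidablePred P] {x : EuclideanSpace ℝ (Fin nn)}
    (hli : LinearIndependent ℝ (Sum.elim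
      (fun j : Fin mm =>
        (ContinuousLinearMap.adjoint (fderiv ℝ h x)) (EuclideanSpace.single j 1))
      (fun l : {l : Fin L // P l} => gradient (q (l : Fin L)) x))) :
    Function.Injective (constraintOp q h P x) := by
  rw [injective_iff_map_eq_zero]
  rintro ⟨w, y⟩ hz
  rw [constraintOp_apply] at hz
  have hw : w = ∑ j, w j • EuclideanSpace.single j (1 : ℝ) := by
    simpa using ((EuclideanSpace.basisFun (Fin mm) ℝ).sum_repr w).symm
  have hadj : ContinuousLinearMap.adjoint (fderiv ℝ h x) w
      = ∑ j, w j • ContinuousLinearMap.adjoint (fderiv ℝ h x) (EuclideanSpace.single j 1) := by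
    conv_lhs => rw [hw]
    simp only [map_sum, map_smul]
  have key := Fintype.linearIndependent_iff.1 hli (Sum.elim (fun j => w j) y) (by
    rw [Fintype.sum_sum_type]
    simpa only [Sum.elim_inl, Sum.elim_inr, ← hadj] using hz)
  refine Prod.ext ?_ ?_
  · ext j
    simpa using key (Sum.inl j)
  · ext l
    simpa using key (Sum.inr l)

/-- dual boundedness for UDD-ALM with nonlinear constraints under LICQ (Lemma 4.6). -/
theorem udd_alm_nonlinear_dual_bounded
    {nn mm L : ℕ}
    (q : Fin L → EuclideanSpace ℝ (Fin nn) → ℝ)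
    (hq : ∀ l, ContDiff ℝ 1 (q l))
    (hXne : {u : EuclideanSpace ℝ (Fin nn) | ∀ l, q l u ≤ 0}.Nonempty)
    (hXcomp : IsCompact {u : EuclideanSpace ℝ (Fin nn) | ∀ l, q l u ≤ 0})
    (f g0 : EuclideanSpace ℝ (Fin nn) → ℝ)
    (hg0conv : ConvexOn ℝ Set.univ g0) (hg0cont : Continuous g0)
    (hfC1 : ContDiff ℝ 1 f)
    (h : EuclideanSpace ℝ (Fin nn) → EuclideanSpace ℝ (Fin mm))
    (hhC1 : ContDiff ℝ 1 h)
    (ρ ϱ c ν : ℝ) (hρ : 0 < ρ) (hϱ : 0 < ϱ) (hc : 0 < c) (hν : 0 < ν)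
    (x : ℕ → EuclideanSpace ℝ (Fin nn)) (μ : ℕ → EuclideanSpace ℝ (Fin mm))
    (y : ℕ → Fin L → ℝ) (ζ : ℕ → EuclideanSpace ℝ (Fin nn))
    (hxX : ∀ k, x k ∈ {u : EuclideanSpace ℝ (Fin nn) | ∀ l, q l u ≤ 0})
    (hy : ∀ k l, 0 ≤ y (k+1) l)
    (hζ : ∀ (k : ℕ), ∀ u : EuclideanSpace ℝ (Fin nn),
      g0 u ≥ g0 (x (k+1)) + ⟪ζ (k+1), u - x (k+1)⟫)
    (hdesc : ∀ k, LrhoNL f g0 h ρ (x (k+1)) (μ k)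
      ≤ LrhoNL f g0 h ρ (x k) (μ k) - ν * ‖x (k+1) - x k‖ ^ 2)
    (hstat : ∀ k, (0 : EuclideanSpace ℝ (Fin nn))
      = gradient f (x (k+1)) + ζ (k+1)
        + (ContinuousLinearMap.adjoint (fderiv ℝ h (x (k+1)))) (μ k + ρ • h (x (k+1)))
        + c • (x (k+1) - x k)
        + ∑ l, y (k+1) l • gradient (q l) (x (k+1)))
    (hcomp : ∀ k l, q l (x (k+1)) ≤ 0 ∧ y (k+1) l * q l (x (k+1)) = 0)
    (hμupd : ∀ k, μ (k+1) = μ k - ϱ • h (x (k+1)))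
    (kr : ℕ → ℕ) (hkr : StrictMono kr) (hkrpos : ∀ r, 1 ≤ kr r)
    (xstar : EuclideanSpace ℝ (Fin nn))
    (hxstarX : xstar ∈ {u : EuclideanSpace ℝ (Fin nn) | ∀ l, q l u ≤ 0})
    (hLICQ : LinearIndependent ℝ (Sum.elim
      (fun j : Fin mm =>
        (ContinuousLinearMap.adjoint (fderiv ℝ h xstar)) (EuclideanSpace.single j 1))
      (fun l : {l : Fin L // q l xstar = 0} => gradient (q (l : Fin L)) xstar)))
    (hconv : Filter.Tendsto (fun r => x (kr r)) Filter.atTop (nhds xstar)) :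
    ∃ C : ℝ, ∀ r, ‖μ (kr r)‖ ≤ C := by
  classical
  obtain ⟨M, hM⟩ := subgradient_bound hg0cont hXcomp
  obtain ⟨Bf, hBf⟩ := hXcomp.exists_bound_of_continuousOn
    (continuous_gradient_of_contDiff hfC1).continuousOn
  obtain ⟨Bh, hBh⟩ := hXcomp.exists_bound_of_continuousOn hhC1.continuous.continuousOn
  obtain ⟨R, hR⟩ := hXcomp.exists_bound_of_continuousOn continuous_id.continuousOn
  let P : Fin L → Prop := fun l => q l xstar = 0
  obtain ⟨K, hK, hKev⟩ := eventually_norm_le_of_injective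
    (((continuous_constraintOp hq hhC1 P).tendsto xstar).comp hconv)
    (constraintOp_injective (P := P) hLICQ)
  have hinact : ∀ᶠ r in atTop, ∀ l, ¬ P l → q l (x (kr r)) < 0 := by
    refine eventually_all.2 fun l => ?_
    by_cases hl : P l
    · exact Eventually.of_forall fun r hn => absurd hl hn
    · have hlt : q l xstar < 0 := lt_of_le_of_ne (hxstarX l) hl
      filter_upwards [(((hq l).continuous.tendsto xstar).comp hconv).eventually_lt_const hlt]
        with r hr _ using hr
  have hev : ∀ᶠ r in atTop, ‖μ (kr r)‖ ≤ K * (Bf + M + c * (R + R)) + ρ * Bh + ϱ * Bh := by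
    filter_upwards [hKev, hinact] with r hKr hr
    obtain ⟨k, hk⟩ : ∃ k, kr r = k + 1 := ⟨kr r - 1, by have := hkrpos r; omega⟩
    simp only [Function.comp_apply] at hKr
    rw [hk] at hKr hr ⊢
    have hy0 : ∀ l, ¬ P l → y (k + 1) l = 0 := fun l hl =>
      (mul_eq_zero.1 (hcomp k l).2).resolve_right (hr l hl).ne
    have hsum : ∑ l, y (k + 1) l • gradient (q l) (x (k + 1))
        = ∑ l : {l // P l}, y (k + 1) l • gradient (q l) (x (k + 1)) := by
      rw [← Fintype.sum_subtype_add_sum_subtype P, add_eq_left]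
      exact Finset.sum_eq_zero fun l _ => by rw [hy0 l l.2, zero_smul]
    have hz := hKr (μ k + ρ • h (x (k + 1)), fun l => y (k + 1) l)
    -- Stationarity moves every bounded term to the right-hand side of the linear system.
    have hres : constraintOp q h P (x (k + 1)) (μ k + ρ • h (x (k + 1)), fun l => y (k + 1) l)
        = -(gradient f (x (k + 1)) + ζ (k + 1) + c • (x (k + 1) - x k)) := by
      rw [constraintOp_apply, ← hsum, eq_neg_iff_add_eq_zero, hstat k]
      abel
    rw [hres, norm_neg] at hz
    have hb : ‖gradient f (x (k + 1)) + ζ (k + 1) + c • (x (k + 1) - x k)‖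
        ≤ Bf + M + c * (R + R) := by
      refine norm_add₃_le.trans ?_
      rw [norm_smul, Real.norm_of_nonneg hc.le]
      gcongr
      · exact hBf _ (hxX _)
      · exact hM _ (hxX (k + 1)) _ (hζ k)
      · exact (norm_sub_le _ _).trans (add_le_add (hR _ (hxX _)) (hR _ (hxX _)))
    have hw : ‖μ k + ρ • h (x (k + 1))‖ ≤ K * (Bf + M + c * (R + R)) :=
      (norm_fst_le _).trans (hz.trans (by gcongr))
    have hhB : ‖h (x (k + 1))‖ ≤ Bh := hBh _ (hxX _)
    have hμ : μ (k + 1)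
        = (μ k + ρ • h (x (k + 1))) - ρ • h (x (k + 1)) - ϱ • h (x (k + 1)) := by
      rw [hμupd k]
      abel
    rw [hμ]
    refine (norm_sub_le _ _).trans (add_le_add ((norm_sub_le _ _).trans (add_le_add hw ?_)) ?_)
    · rw [norm_smul, Real.norm_of_nonneg hρ.le]
      gcongr
    · rw [norm_smul, Real.norm_of_nonneg hϱ.le]
      gcongr
  obtain ⟨C, hC⟩ := (Filter.isBoundedUnder_of_eventually_le hev).bddAbove_range
  exact ⟨C, fun r => hC ⟨r, rfl⟩⟩
end
end
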